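/- Let λ ∈ Λ_I⁺. Then in the free ℤ-module on h*: Σ_{β∈Ψ_λ⁺} θ(s_βλ) = Σ_{β∈Ψ_λ⁺⁺} θ(s_βλ) = Σ_{μ∈Λ_I⁺} c(λ,μ) θ(μ), where c(λ,μ) = Σ_{β∈Ψ_λ⁺⁺} sgn(s_βλ,μ) is nonzero for only finitely many μ. Moreover, for each μ ∈ Λ_I⁺, c(λ,μ) = Σ_{β∈Ψ⁺_{λ,μ}} (−1)^{ℓ(w_β)}, where Ψ⁺_{λ,μ} = {β ∈ Ψ_λ⁺ : μ = w_β s_βλ for some w_β ∈ W_I} (for such β the element w_β ∈ W_I is unique). -/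

import Mathlib

open scoped RealInnerProductSpace
open Classical

noncomputable section

namespace JantzenGVM

variable {V : Type*} [NormedAddCommGroup V] [InnerProductSpace ℝ V] [FiniteDimensional ℝ V]

/-- The coroot `α^∨ = 2α/⟨α,α⟩` of a vector `α` (junk value `0` when `α = 0`). -/
def coroot (α : V) : V := (2 / ⟪α, α⟫) • α

/-- The linear functional `v ↦ ⟨v, α^∨⟩`. -/
def corootForm (α : V) : V →ₗ[ℝ] ℝ where
  toFun v := ⟪v, coroot α⟫
  map_add' x y := by simp [inner_add_left]
  map_smul' c x := by simp [inner_smul_left]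

lemma corootForm_self {α : V} (h : ⟪α, α⟫ ≠ 0) : corootForm α α = 2 := by
  simp only [corootForm, coroot, LinearMap.coe_mk, AddHom.coe_mk, real_inner_smul_right]
  field_simp

/-- The reflection `s_α` as a linear automorphism of `V` (the identity when `⟨α,α⟩ = 0`). -/
def reflV (α : V) : V ≃ₗ[ℝ] V :=
  if h : ⟪α, α⟫ = 0 then LinearEquiv.refl ℝ V
  else Module.reflection (corootForm_self h)

/-- `h* = ℂ ⊗ V`, realized as the space of real-linear functionals `V → ℂ` via the
inner product; an element `λ` pairs with a root `α` by `⟨λ, α⟩ = λ α` and with the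
coroot by `⟨λ, α^∨⟩ = λ (coroot α)`. -/
abbrev HStar (V : Type*) [NormedAddCommGroup V] [InnerProductSpace ℝ V] := V →ₗ[ℝ] ℂ

/-- The canonical embedding of `V` into `h*`. -/
def emb (α : V) : HStar V where
  toFun v := (⟪α, v⟫ : ℂ)
  map_add' x y := by simp [inner_add_right]
  map_smul' c x := by simp [inner_smul_right, Complex.real_smul]

/-- The action of a linear automorphism `w` of `V` on `h*`: `(w • λ)(v) = λ(w⁻¹ v)`. -/
def wAct (w : V ≃ₗ[ℝ] V) (l : HStar V) : HStar V := l ∘ₗ (w.symm : V →ₗ[ℝ] V)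

/-- The reflection `s_β λ = λ - ⟨λ, β^∨⟩ β` acting on `h*`. -/
def sRefl (β : V) (l : HStar V) : HStar V := l - l (coroot β) • emb β

/-- The group generated by the reflections in the elements of `Φ'`. -/
def weyl (Φ' : Set V) : Subgroup (V ≃ₗ[ℝ] V) :=
  Subgroup.closure {w | ∃ α ∈ Φ', w = reflV α}

/-- A finite, reduced, crystallographic root system spanning the Euclidean space `V`,
together with a choice of positive system and the corresponding simple system. -/
structure RootSys (V : Type*) [NormedAddCommGroup V] [InnerProductSpace ℝ V]
    [FiniteDimensional ℝ V] where
  Φ : Finset V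
  pos : Finset V
  Δ : Finset V
  ne_zero : ∀ α ∈ Φ, α ≠ (0 : V)
  span_eq_top : Submodule.span ℝ (Φ : Set V) = ⊤
  reduced : ∀ α ∈ Φ, ∀ c : ℝ, c • α ∈ Φ → c = 1 ∨ c = -1
  refl_mem : ∀ α ∈ Φ, ∀ β ∈ Φ, reflV α β ∈ Φ
  crystallographic : ∀ α ∈ Φ, ∀ β ∈ Φ, ∃ n : ℤ, ⟪β, coroot α⟫ = (n : ℝ)
  pos_subset : pos ⊆ Φ
  mem_pos_or : ∀ α ∈ Φ, α ∈ pos ∨ -α ∈ pos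
  not_both : ∀ α ∈ pos, -α ∉ pos
  simple_subset : Δ ⊆ pos
  simple_indep : LinearIndependent ℝ (fun x : {a : V // a ∈ Δ} => x.1)
  simple_gen : ∀ β ∈ pos, ∃ c : V → ℝ, (∀ α ∈ Δ, 0 ≤ c α) ∧ β = ∑ α ∈ Δ, c α • α

/-- A subsystem of the root system: a subset of `Φ` closed under its own reflections. -/
def IsSubsystem (S : RootSys V) (Φ' : Set V) : Prop :=
  Φ' ⊆ (S.Φ : Set V) ∧ ∀ α ∈ Φ', ∀ β ∈ Φ', reflV α β ∈ Φ'

/-- The length of `w`, i.e. the number of positive roots sent to negative roots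
(this equals the Coxeter length for elements of the Weyl group). -/
def len (S : RootSys V) (w : V ≃ₗ[ℝ] V) : ℕ :=
  {β ∈ (S.pos : Set V) | w β ∉ (S.pos : Set V)}.ncard

/-- `Φ_I = ℤI ∩ Φ`, the subsystem generated by a subset `I` of the simple roots. -/
def PhiI (S : RootSys V) (I : Finset V) : Set V :=
  {α ∈ (S.Φ : Set V) | α ∈ Submodule.span ℤ (I : Set V)}

/-- `z` is a positive integer. -/
def IsPosInt (z : ℂ) : Prop := ∃ n : ℤ, 0 < n ∧ z = (n : ℂ)

/-- `z` is an integer. -/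
def IsInt (z : ℂ) : Prop := ∃ n : ℤ, z = (n : ℂ)

/-- `Λ_I⁺ = {λ ∈ h* : ⟨λ, α^∨⟩ ∈ ℤ_{>0} for all α ∈ I}`. -/
def LambdaP (I : Set V) : Set (HStar V) :=
  {l | ∀ α ∈ I, IsPosInt (l (coroot α))}

/-- `Λ⁺(Φ'', Φ') = {ν ∈ ℂΦ' : ⟨ν, α^∨⟩ ∈ ℤ_{>0} for all α ∈ Φ'' ∩ Φ⁺}`. -/
def LambdaPSub (S : RootSys V) (Φ'' Φ' : Set V) : Set (HStar V) :=
  {l | l ∈ Submodule.span ℂ (emb '' Φ') ∧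
       ∀ α ∈ Φ'' ∩ (S.pos : Set V), IsPosInt (l (coroot α))}

/-- `λ` is `Φ''`-regular: `⟨λ, α⟩ ≠ 0` for all `α ∈ Φ''`. -/
def IsRegularOn (Φ'' : Set V) (l : HStar V) : Prop := ∀ α ∈ Φ'', l α ≠ 0

/-- `Ψ⁺(λ, Φ'', Φ') = {β ∈ (Φ' ∩ Φ⁺) \ Φ'' : ⟨λ, β^∨⟩ ∈ ℤ_{>0}}`. -/
def PsiP (S : RootSys V) (Φ'' Φ' : Set V) (l : HStar V) : Set V :=
  {β | β ∈ Φ' ∩ (S.pos : Set V) ∧ β ∉ Φ'' ∧ IsPosInt (l (coroot β))}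

/-- `Ψ⁺⁺(λ, Φ'', Φ') = {β ∈ Ψ⁺(λ, Φ'', Φ') : s_β λ is Φ''-regular}`. -/
def PsiPP (S : RootSys V) (Φ'' Φ' : Set V) (l : HStar V) : Set V :=
  {β ∈ PsiP S Φ'' Φ' l | ∀ α ∈ Φ'', (sRefl β l) α ≠ 0}

/-- The sign function: `sgn(λ, μ) = (-1)^{ℓ(w)}` if `λ, μ` are `Φ''`-regular and
`μ = wλ` for some `w ∈ W(Φ'')`, and `0` otherwise. -/
def sgnW (S : RootSys V) (Φ'' : Set V) (l m : HStar V) : ℤ :=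
  if h : IsRegularOn Φ'' l ∧ IsRegularOn Φ'' m ∧ ∃ w, w ∈ weyl Φ'' ∧ m = wAct w l
  then (-1) ^ len S h.2.2.choose else 0

/-- The Jantzen coefficient `c(λ, μ, Φ'', Φ') = Σ_{β ∈ Ψ⁺⁺(λ,Φ'',Φ')} sgn(s_β λ, μ)`. -/
def jc (S : RootSys V) (Φ'' Φ' : Set V) (l m : HStar V) : ℤ :=
  ∑ᶠ β ∈ PsiPP S Φ'' Φ' l, sgnW S Φ'' (sRefl β l) m

/-- The symmetrized Jantzen coefficient `c̃(λ, μ, Φ'', Φ')`. -/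
def jcSym (S : RootSys V) (Φ'' Φ' : Set V) (l m : HStar V) : ℤ :=
  jc S Φ'' Φ' l m + jc S Φ'' Φ' m l

/-- `θ(λ) = Σ_{w ∈ W_I} (-1)^{ℓ(w)} e^{wλ}` in the free `ℤ`-module on `h*`. -/
def theta (S : RootSys V) (I : Finset V) (l : HStar V) : HStar V →₀ ℤ :=
  ∑ᶠ w ∈ (weyl (PhiI S I) : Set (V ≃ₗ[ℝ] V)),
    Finsupp.single (wAct w l) ((-1) ^ len S w)

/-- `Φ_λ = {α ∈ Φ : ⟨λ, α⟩ = 0}`. -/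
def singSet (S : RootSys V) (l : HStar V) : Set V :=
  {α ∈ (S.Φ : Set V) | l α = 0}

/-- `Φ_{[λ]} = {α ∈ Φ : ⟨λ, α^∨⟩ ∈ ℤ}`. -/
def integralSet (S : RootSys V) (l : HStar V) : Set V :=
  {α ∈ (S.Φ : Set V) | IsInt (l (coroot α))}

/-- `(ℚ A) ∩ Φ`, the intersection of the rational span of `A` with `Φ`.
Taking `A = Φ_I ∪ {β}` gives `Φ_{β,1}`; taking `A = Φ_λ ∪ {β}` gives `Φ_{β,2}`. -/
def ratSpanRoots (S : RootSys V) (A : Set V) : Set V :=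
  {γ ∈ (S.Φ : Set V) | ∃ (t : Finset V) (c : V → ℚ),
    (t : Set V) ⊆ A ∧ γ = ∑ α ∈ t, (c α : ℝ) • α}

/-- `Φ_{β,0}`, the irreducible component of `Φ` containing `β`. -/
def component (S : RootSys V) (β : V) : Set V :=
  {γ ∈ (S.Φ : Set V) |
    Relation.ReflTransGen
      (fun x y => x ∈ (S.Φ : Set V) ∧ y ∈ (S.Φ : Set V) ∧ ⟪x, y⟫ ≠ 0) β γ}

/-- `λ|_{Φ'}`: the unique element of `ℂΦ'` with `⟨λ|_{Φ'}, α^∨⟩ = ⟨λ, α^∨⟩`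
for all `α ∈ Φ'`. -/
def restrictW (Φ' : Set V) (l : HStar V) : HStar V :=
  letI : Nonempty (HStar V) := ⟨0⟩
  Classical.epsilon fun m =>
    m ∈ Submodule.span ℂ (emb '' Φ') ∧ ∀ α ∈ Φ', m (coroot α) = l (coroot α)

/-- `ᴵWᴶ = {w ∈ W : ℓ(uwv) = ℓ(u) + ℓ(w) + ℓ(v) for all u ∈ W_I, v ∈ W_J}`. -/
def doubleCoset (S : RootSys V) (I J : Finset V) : Set (V ≃ₗ[ℝ] V) :=
  {w | w ∈ weyl (S.Φ : Set V) ∧ ∀ u ∈ weyl (PhiI S I), ∀ v ∈ weyl (PhiI S J),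
    len S (u * w * v) = len S u + len S w + len S v}

/-- The fundamental weight `ϖ_j` relative to an enumeration `e` of the simple roots:
the unique element of `h*` with `⟨ϖ_j, α_k^∨⟩ = δ_{jk}`. -/
def fundWeight {n : ℕ} (e : Fin n → V) (j : Fin n) : HStar V :=
  letI : Nonempty (HStar V) := ⟨0⟩
  Classical.epsilon fun m => ∀ k : Fin n, m (coroot (e k)) = if k = j then 1 else 0

/-- The labels of the irreducible Dynkin types. -/
inductive LieType | A | B | C | D | E | F | G
deriving DecidableEq

/-- The Cartan matrix of type `A_n` (1-based indices): entry `(i,j)` is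
`⟨α_i, α_j^∨⟩`. -/
def cartanA (i j : ℕ) : ℤ :=
  if i = j then 2 else if i + 1 = j ∨ j + 1 = i then -1 else 0

/-- The Cartan matrices of the irreducible types in the standard (Bourbaki/Humphreys)
numbering of the Dynkin diagram: `cartanEntry t n i j = ⟨α_i, α_j^∨⟩` (1-based). -/
def cartanEntry : LieType → ℕ → ℕ → ℕ → ℤ
  | .A, _, i, j => cartanA i j
  | .B, n, i, j => if i + 1 = n ∧ j = n then -2 else cartanA i j
  | .C, n, i, j => if i = n ∧ j + 1 = n then -2 else cartanA i j
  | .D, n, i, j =>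
      if i = j then 2
      else if (i + 2 = n ∧ j = n) ∨ (i = n ∧ j + 2 = n) then -1
      else if (i + 1 = n ∧ j = n) ∨ (i = n ∧ j + 1 = n) then 0
      else cartanA i j
  | .E, _, i, j =>
      if i = j then 2
      else if (i = 1 ∧ j = 3) ∨ (i = 3 ∧ j = 1) ∨ (i = 2 ∧ j = 4) ∨ (i = 4 ∧ j = 2) then -1
      else if (i = 1 ∧ j = 2) ∨ (i = 2 ∧ j = 1) ∨ (i = 2 ∧ j = 3) ∨ (i = 3 ∧ j = 2) then 0
      else cartanA i j
  | .F, _, i, j => if i = 2 ∧ j = 3 then -2 else cartanA i j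
  | .G, _, i, j => if i = 2 ∧ j = 1 then -3 else cartanA i j

/-- The standard basis vector `e_k` (1-based index, junk `0` outside `1 ≤ k ≤ n`). -/
def stdE (n k : ℕ) : EuclideanSpace ℝ (Fin n) :=
  if h : 1 ≤ k ∧ k ≤ n then EuclideanSpace.single ⟨k - 1, by omega⟩ 1 else 0

/-- The labels `B`, `C`, `D` of the classical non-`A` types. -/
inductive BCD | B | C | D
deriving DecidableEq

/-- The root set of `B_n` / `C_n` / `D_n` in the standard realization. -/
def bcdRoots (t : BCD) (n : ℕ) : Set (EuclideanSpace ℝ (Fin n)) :=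
  {v | (∃ i j : ℕ, 1 ≤ i ∧ i < j ∧ j ≤ n ∧
          (v = stdE n i - stdE n j ∨ v = -(stdE n i - stdE n j) ∨
           v = stdE n i + stdE n j ∨ v = -(stdE n i + stdE n j))) ∨
       (match t with
        | .B => ∃ i : ℕ, 1 ≤ i ∧ i ≤ n ∧ (v = stdE n i ∨ v = -stdE n i)
        | .C => ∃ i : ℕ, 1 ≤ i ∧ i ≤ n ∧ (v = (2:ℝ) • stdE n i ∨ v = -((2:ℝ) • stdE n i))
        | .D => False)}

/-- The positive roots of `B_n` / `C_n` / `D_n` in the standard realization. -/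
def bcdPos (t : BCD) (n : ℕ) : Set (EuclideanSpace ℝ (Fin n)) :=
  {v | (∃ i j : ℕ, 1 ≤ i ∧ i < j ∧ j ≤ n ∧
          (v = stdE n i - stdE n j ∨ v = stdE n i + stdE n j)) ∨
       (match t with
        | .B => ∃ i : ℕ, 1 ≤ i ∧ i ≤ n ∧ v = stdE n i
        | .C => ∃ i : ℕ, 1 ≤ i ∧ i ≤ n ∧ v = (2:ℝ) • stdE n i
        | .D => False)}

/-- The simple roots of `B_n` / `C_n` / `D_n` in the standard realization. -/
def bcdSimple (t : BCD) (n : ℕ) : Set (EuclideanSpace ℝ (Fin n)) :=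
  {v | (∃ i : ℕ, 1 ≤ i ∧ i < n ∧ v = stdE n i - stdE n (i + 1)) ∨
       (match t with
        | .B => v = stdE n n
        | .C => v = (2:ℝ) • stdE n n
        | .D => v = stdE n (n - 1) + stdE n n)}

/-- The simple root `α_k` of `B_n` / `C_n` / `D_n` (1-based index `k`). -/
def bcdAlpha (t : BCD) (n k : ℕ) : EuclideanSpace ℝ (Fin n) :=
  if k < n then stdE n k - stdE n (k + 1)
  else match t with
  | .B => stdE n n
  | .C => (2:ℝ) • stdE n n
  | .D => stdE n (n - 1) + stdE n n

/-!
The function `θ` is antisymmetric under `W_I`, so it vanishes on every weight orthogonal to some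
root of `Φ_I`: such a root is `W_I`-conjugate to a simple root `α ∈ I`, and `s_α` has sign `-1`.
A `Φ_I`-regular weight that is integral on `I` has a conjugate `μ = wν` in `Λ_I⁺`, namely the one
whose value at a vector having inner product `1` with every simple root is largest. Both `μ` and
`w` are unique, because a nontrivial element of `W_I` makes some `α ∈ I` negative while weights in
`Λ_I⁺` are positive on the positive roots of `Φ_I`. Hence `θ(ν) = Σ_{μ ∈ Λ_I⁺} sgn(ν, μ) θ(μ)`
for every integral `ν`, with at most one nonzero term; summing over `ν = s_β λ` and exchanging the
two sums gives the Jantzen coefficients.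
-/

section Finsum

lemma finsum_mem_comm_of_finite {ι κ M : Type*} [AddCommMonoid M] {s : Set ι} {t : Set κ}
    (f : ι → κ → M) (hs : s.Finite) (ht : ∀ a ∈ s, (t ∩ Function.support (f a)).Finite) :
    ∑ᶠ a ∈ s, ∑ᶠ b ∈ t, f a b = ∑ᶠ b ∈ t, ∑ᶠ a ∈ s, f a b := by
  set T := ⋃ a ∈ s, t ∩ Function.support (f a) with hT
  have mem_T {a b} (ha : a ∈ s) (hab : f a b ≠ 0) : b ∈ T ↔ b ∈ t := by
    simp only [hT, Set.mem_iUnion, Set.mem_inter_iff, exists_prop]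
    exact ⟨fun ⟨_, _, hb, _⟩ => hb, fun hb => ⟨a, ha, hb, hab⟩⟩
  calc ∑ᶠ a ∈ s, ∑ᶠ b ∈ t, f a b
      = ∑ᶠ a ∈ s, ∑ᶠ b ∈ T, f a b := finsum_mem_congr rfl fun a ha =>
        finsum_mem_inter_support_eq' _ _ _ fun b hab => (mem_T ha hab).symm
    _ = ∑ᶠ b ∈ T, ∑ᶠ a ∈ s, f a b := finsum_mem_comm f hs (hs.biUnion ht)
    _ = ∑ᶠ b ∈ t, ∑ᶠ a ∈ s, f a b := finsum_mem_inter_support_eq' _ _ _ fun b hb => by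
        obtain ⟨a, ha, hab⟩ := exists_ne_zero_of_finsum_mem_ne_zero hb
        exact mem_T ha hab

end Finsum

section Pairing

omit [FiniteDimensional ℝ V]

lemma inner_coroot (v α : V) : ⟪v, coroot α⟫ = 2 / ⟪α, α⟫ * ⟪v, α⟫ := by
  rw [coroot, real_inner_smul_right]

lemma coroot_apply_of_isometry {w : V ≃ₗ[ℝ] V} (hw : ∀ x y, ⟪w x, w y⟫ = ⟪x, y⟫) (α : V) :
    coroot (w α) = w (coroot α) := by
  simp only [coroot, hw, map_smul]

lemma weight_coroot (l : HStar V) (α : V) : l (coroot α) = (2 / ⟪α, α⟫ : ℝ) * l α := by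
  rw [coroot, map_smul, Complex.real_smul]

lemma wAct_mul (u w : V ≃ₗ[ℝ] V) (l : HStar V) : wAct (u * w) l = wAct u (wAct w l) := rfl

lemma wAct_apply (w : V ≃ₗ[ℝ] V) (l : HStar V) (v : V) : wAct w l v = l (w⁻¹ v) := rfl

lemma wAct_apply_apply (w : V ≃ₗ[ℝ] V) (l : HStar V) (v : V) : wAct w l (w v) = l v :=
  congrArg l (w.symm_apply_apply v)

lemma sRefl_apply (β : V) (l : HStar V) (v : V) :
    sRefl β l v = l v - l (coroot β) * (⟪β, v⟫ : ℝ) := rfl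

end Pairing

section Reflection

lemma reflV_apply (α v : V) : reflV α v = v - ⟪v, coroot α⟫ • α := by
  unfold reflV
  split_ifs with h
  · simp [inner_self_eq_zero.mp h]
  · simp [Module.reflection_apply, corootForm]

lemma reflV_self (α : V) : reflV α α = -α := by
  rcases eq_or_ne α 0 with rfl | hα
  · simp
  · rw [reflV_apply, inner_coroot, div_mul_cancel₀ _ (inner_self_ne_zero.mpr hα)]
    module

lemma reflV_reflV (α v : V) : reflV α (reflV α v) = v := by
  rw [reflV_apply α v, map_sub, map_smul, reflV_self, reflV_apply]
  module

lemma reflV_mul_self (α : V) : reflV α * reflV α = 1 :=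
  LinearEquiv.ext (reflV_reflV α)

lemma reflV_inv (α : V) : (reflV α)⁻¹ = reflV α :=
  inv_eq_of_mul_eq_one_left (reflV_mul_self α)

lemma inner_reflV_reflV (α x y : V) : ⟪reflV α x, reflV α y⟫ = ⟪x, y⟫ := by
  rcases eq_or_ne α 0 with rfl | hα
  · simp [reflV_apply]
  · have hα' : ⟪α, α⟫ ≠ 0 := inner_self_ne_zero.mpr hα
    simp only [reflV_apply, inner_coroot, inner_sub_left, inner_sub_right, real_inner_smul_left,
      real_inner_smul_right, real_inner_comm α]
    field_simp
    ring

lemma reflV_apply_mul_of_isometry {w : V ≃ₗ[ℝ] V} (hw : ∀ x y, ⟪w x, w y⟫ = ⟪x, y⟫) (α : V) :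
    reflV (w α) * w = w * reflV α := by
  ext v
  simp only [LinearEquiv.mul_apply, reflV_apply, coroot_apply_of_isometry hw, hw, map_sub,
    map_smul]

lemma wAct_reflV (α : V) (l : HStar V) : wAct (reflV α) l = sRefl α l := by
  ext v
  rw [wAct_apply, reflV_inv, reflV_apply, inner_coroot, real_inner_comm α v, sRefl_apply,
    weight_coroot, map_sub, map_smul, Complex.real_smul]
  push_cast
  ring

lemma coroot_reflV (α γ : V) :
    coroot (reflV α γ) = coroot γ - ⟪α, coroot γ⟫ • coroot α := by
  rw [coroot_apply_of_isometry (inner_reflV_reflV α), reflV_apply, inner_coroot,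
    mul_comm, mul_smul, ← coroot, real_inner_comm]

end Reflection

section Weyl

variable {A : Set V}

lemma reflV_mem_weyl {α : V} (hα : α ∈ A) : reflV α ∈ weyl A :=
  Subgroup.subset_closure ⟨α, hα, rfl⟩

lemma weyl_mono {B : Set V} (h : A ⊆ B) : weyl A ≤ weyl B :=
  Subgroup.closure_mono fun _ ⟨α, hα, hw⟩ => ⟨α, h hα, hw⟩

/-- The product `s_{α₁} ⋯ s_{αₖ}` of the reflections in the letters of a word `α₁ ⋯ αₖ` in the
alphabet `A`, for arguments by induction on words: the sign character and the exchange
condition. -/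
def wordProd (L : List A) : V ≃ₗ[ℝ] V := (L.map fun α => reflV α.1).prod

lemma wordProd_cons (α : A) (L : List A) : wordProd (α :: L) = reflV α.1 * wordProd L :=
  List.prod_cons

lemma wordProd_append (L L' : List A) : wordProd (L ++ L') = wordProd L * wordProd L' := by
  simp [wordProd]

lemma wordProd_concat (L : List A) (α : A) : wordProd (L ++ [α]) = wordProd L * reflV α.1 := by
  simp [wordProd]

lemma wordProd_mem_weyl (L : List A) : wordProd L ∈ weyl A := by
  refine Subgroup.list_prod_mem _ fun w hw => ?_
  obtain ⟨α, -, rfl⟩ := List.mem_map.mp hw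
  exact reflV_mem_weyl α.2

lemma exists_wordProd_eq {w : V ≃ₗ[ℝ] V} (hw : w ∈ weyl A) : ∃ L : List A, wordProd L = w := by
  induction hw using Subgroup.closure_induction_left with
  | one => exact ⟨[], rfl⟩
  | mul_left _ hs _ _ ih =>
    obtain ⟨α, hα, rfl⟩ := hs
    obtain ⟨L, rfl⟩ := ih
    exact ⟨⟨α, hα⟩ :: L, wordProd_cons _ _⟩
  | inv_mul_cancel _ hs _ _ ih =>
    obtain ⟨α, hα, rfl⟩ := hs
    obtain ⟨L, rfl⟩ := ih
    exact ⟨⟨α, hα⟩ :: L, by rw [wordProd_cons, reflV_inv]⟩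

@[elab_as_elim]
lemma weyl_induction {P : (V ≃ₗ[ℝ] V) → Prop} (one : P 1)
    (refl_mul : ∀ α ∈ A, ∀ w, P w → P (reflV α * w)) {w : V ≃ₗ[ℝ] V} (hw : w ∈ weyl A) : P w := by
  obtain ⟨L, rfl⟩ := exists_wordProd_eq hw
  induction L with
  | nil => exact one
  | cons α L ih => exact refl_mul α.1 α.2 _ (ih (wordProd_mem_weyl L))

lemma inner_weyl {w : V ≃ₗ[ℝ] V} (hw : w ∈ weyl A) : ∀ x y, ⟪w x, w y⟫ = ⟪x, y⟫ :=
  weyl_induction (fun _ _ => rfl)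
    (fun α _ w ih x y => (inner_reflV_reflV α (w x) (w y)).trans (ih x y)) hw

lemma weyl_apply_mem {B : Set V} (hB : ∀ α ∈ A, ∀ β ∈ B, reflV α β ∈ B) {w : V ≃ₗ[ℝ] V}
    (hw : w ∈ weyl A) : ∀ β ∈ B, w β ∈ B :=
  weyl_induction (fun _ hβ => hβ) (fun α hα w ih β hβ => hB α hα (w β) (ih β hβ)) hw

end Weyl

section RootSystem

variable (S : RootSys V)

lemma RootSys.neg_mem {α : V} (hα : α ∈ S.Φ) : -α ∈ S.Φ :=
  reflV_self α ▸ S.refl_mem α hα α hα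

lemma RootSys.neg_mem_pos {α : V} (hα : α ∈ S.Φ) (hneg : α ∉ S.pos) : -α ∈ S.pos :=
  (S.mem_pos_or α hα).resolve_left hneg

lemma RootSys.simple_subset_roots : S.Δ ⊆ S.Φ := S.simple_subset.trans S.pos_subset

lemma RootSys.weyl_apply_mem_roots {w : V ≃ₗ[ℝ] V} (hw : w ∈ weyl (S.Φ : Set V)) {β : V}
    (hβ : β ∈ S.Φ) : w β ∈ S.Φ :=
  weyl_apply_mem S.refl_mem hw β hβ

lemma RootSys.finite_weyl : (weyl (S.Φ : Set V) : Set (V ≃ₗ[ℝ] V)).Finite := by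
  have hmaps : Set.MapsTo (fun (w : V ≃ₗ[ℝ] V) (α : S.Φ) => w α.1)
      (weyl (S.Φ : Set V)) (Set.univ.pi fun _ => (S.Φ : Set V)) :=
    fun w hw α _ => S.weyl_apply_mem_roots hw α.2
  refine Set.Finite.of_injOn hmaps (fun w _ w' _ h => ?_)
    (Set.Finite.pi fun _ => S.Φ.finite_toSet)
  exact LinearEquiv.toLinearMap_injective
    (LinearMap.ext_on S.span_eq_top fun α hα => congrFun h ⟨α, hα⟩)

lemma RootSys.exists_inner_eq_one : ∃ ξ : V, ∀ α ∈ S.Δ, ⟪ξ, α⟫ = 1 := by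
  have hindep : LinearIndepOn ℝ id (S.Δ : Set V) := S.simple_indep
  obtain ⟨f, hf⟩ := Module.exists_dual_forall_apply_eq_one hindep
  exact ⟨(InnerProductSpace.toDual ℝ V).symm f.toContinuousLinearMap, fun α hα => by
    rw [InnerProductSpace.toDual_symm_apply]; exact hf α hα⟩

lemma RootSys.coeff_eq_of_sum_eq {c d : V → ℝ}
    (h : ∑ α ∈ S.Δ, c α • α = ∑ α ∈ S.Δ, d α • α) : ∀ α ∈ S.Δ, c α = d α :=
  linearIndepOn_finset_iffₛ.mp (show LinearIndepOn ℝ id (S.Δ : Set V) from S.simple_indep) c d h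

lemma RootSys.reflV_mem_pos {α γ : V} (hα : α ∈ S.Δ) (hγ : γ ∈ S.pos) (hne : γ ≠ α) :
    reflV α γ ∈ S.pos := by
  by_contra hn
  have hαΦ := S.simple_subset_roots hα
  obtain ⟨c, hc, hγc⟩ := S.simple_gen γ hγ
  obtain ⟨d, hd, hγd⟩ := S.simple_gen _
    (S.neg_mem_pos (S.refl_mem α hαΦ γ (S.pos_subset hγ)) hn)
  have hcd : ∀ x ∈ S.Δ, c x + d x = if x = α then ⟪γ, coroot α⟫ else 0 := by
    refine S.coeff_eq_of_sum_eq ?_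
    simp only [add_smul, Finset.sum_add_distrib, ← hγc, ← hγd, ite_smul, zero_smul,
      Finset.sum_ite_eq', if_pos hα]
    rw [reflV_apply]
    abel
  have hγα : γ = c α • α := by
    refine hγc.trans (Finset.sum_eq_single_of_mem α hα fun x hx hxα => ?_)
    have hx0 : c x + d x = 0 := by rw [hcd x hx, if_neg hxα]
    rw [show c x = 0 by linarith [hc x hx, hd x hx], zero_smul]
  rcases S.reduced α hαΦ (c α) (hγα ▸ S.pos_subset hγ) with h1 | h1
  · exact hne (by rw [hγα, h1, one_smul])
  · linarith [hc α hα]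

end RootSystem

section Length

variable {S : RootSys V} {A : Set V}

lemma len_one : len S 1 = 0 := by
  simp [len]

lemma len_mul_reflV_of_apply_mem_pos {α : V} (hα : α ∈ S.Δ) {w : V ≃ₗ[ℝ] V}
    (hwα : w α ∈ S.pos) : len S (w * reflV α) = len S w + 1 := by
  have hinv : {β ∈ (S.pos : Set V) | (w * reflV α) β ∉ (S.pos : Set V)} =
      insert α (reflV α '' {β ∈ (S.pos : Set V) | w β ∉ (S.pos : Set V)}) := by
    ext β
    simp only [Set.mem_insert_iff, Set.mem_image, Set.mem_ofPred_eq, Finset.mem_coe,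
      LinearEquiv.mul_apply]
    constructor
    · rintro ⟨hβ, hwβ⟩
      exact or_iff_not_imp_left.mpr fun hne =>
        ⟨reflV α β, ⟨S.reflV_mem_pos hα hβ hne, hwβ⟩, reflV_reflV α β⟩
    · rintro (rfl | ⟨γ, ⟨hγ, hwγ⟩, rfl⟩)
      · refine ⟨S.simple_subset hα, ?_⟩
        rw [reflV_self, map_neg]
        exact S.not_both _ hwα
      · refine ⟨S.reflV_mem_pos hα hγ fun h => hwγ (h ▸ hwα), ?_⟩
        rwa [reflV_reflV]
  have hnot : α ∉ reflV α '' {β ∈ (S.pos : Set V) | w β ∉ (S.pos : Set V)} := by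
    rintro ⟨γ, ⟨hγ, -⟩, h⟩
    have hγα : γ = -α := by rw [← reflV_reflV α γ, h, reflV_self]
    exact S.not_both α (S.simple_subset hα) (hγα ▸ hγ)
  have hfin : {β ∈ (S.pos : Set V) | w β ∉ (S.pos : Set V)}.Finite :=
    S.pos.finite_toSet.sep _
  rw [len, hinv, Set.ncard_insert_of_notMem hnot (hfin.image _),
    Set.ncard_image_of_injective _ (reflV α).injective, len]

lemma neg_one_pow_len_mul_reflV {α : V} (hα : α ∈ S.Δ) {w : V ≃ₗ[ℝ] V}
    (hw : w ∈ weyl (S.Φ : Set V)) : (-1 : ℤ) ^ len S (w * reflV α) = -(-1) ^ len S w := by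
  by_cases hwα : w α ∈ S.pos
  · rw [len_mul_reflV_of_apply_mem_pos hα hwα, pow_succ, mul_neg_one]
  · have hpos : (w * reflV α) α ∈ S.pos := by
      rw [LinearEquiv.mul_apply, reflV_self, map_neg]
      exact S.neg_mem_pos (S.weyl_apply_mem_roots hw (S.simple_subset_roots hα)) hwα
    have hlen := len_mul_reflV_of_apply_mem_pos hα hpos
    rw [mul_assoc, reflV_mul_self, mul_one] at hlen
    rw [hlen, pow_succ, mul_neg_one, neg_neg]

lemma weyl_le_weyl_roots (hA : A ⊆ S.Δ) : weyl A ≤ weyl (S.Φ : Set V) :=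
  weyl_mono (hA.trans S.simple_subset_roots)

lemma neg_one_pow_len_wordProd (hA : A ⊆ S.Δ) (L : List A) :
    (-1 : ℤ) ^ len S (wordProd L) = (-1) ^ L.length := by
  induction L using List.reverseRecOn with
  | nil => exact congrArg _ len_one
  | append_singleton L α ih =>
    rw [wordProd_concat, neg_one_pow_len_mul_reflV (hA α.2)
      (weyl_le_weyl_roots hA (wordProd_mem_weyl L)), ih, List.length_append, List.length_singleton,
      pow_succ, mul_neg_one]

lemma neg_one_pow_len_mul (hA : A ⊆ S.Δ) {u w : V ≃ₗ[ℝ] V} (hu : u ∈ weyl A) (hw : w ∈ weyl A) :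
    (-1 : ℤ) ^ len S (u * w) = (-1) ^ len S u * (-1) ^ len S w := by
  obtain ⟨L, rfl⟩ := exists_wordProd_eq hu
  obtain ⟨L', rfl⟩ := exists_wordProd_eq hw
  simp only [← wordProd_append, neg_one_pow_len_wordProd hA, List.length_append, pow_add]

-- The exchange condition: the letter deleted is the one that turns the image of `α` negative.
lemma exists_shorter_wordProd_eq_mul_reflV (hA : A ⊆ S.Δ) (α : A) (L : List A)
    (hL : wordProd L α.1 ∉ S.pos) :
    ∃ L' : List A, L'.length < L.length ∧ wordProd L' = wordProd L * reflV α.1 := by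
  induction L with
  | nil => exact absurd (S.simple_subset (hA α.2)) hL
  | cons a T ih =>
    by_cases hT : wordProd T α.1 ∈ S.pos
    · have ha : wordProd T α.1 = a.1 := by
        by_contra hne
        refine hL ?_
        rw [wordProd_cons]
        exact S.reflV_mem_pos (hA a.2) hT hne
      refine ⟨T, by simp, ?_⟩
      rw [wordProd_cons, mul_assoc,
        ← reflV_apply_mul_of_isometry (inner_weyl (wordProd_mem_weyl T)), ha, ← mul_assoc,
        reflV_mul_self, one_mul]
    · obtain ⟨L', hlen, hL'⟩ := ih hT
      exact ⟨a :: L', by simpa using hlen, by simp only [wordProd_cons, hL', mul_assoc]⟩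

lemma exists_apply_notMem_pos_of_ne_one (hA : A ⊆ S.Δ) {w : V ≃ₗ[ℝ] V} (hw : w ∈ weyl A)
    (hne : w ≠ 1) : ∃ α ∈ A, w α ∉ S.pos := by
  obtain ⟨L, rfl, hmin⟩ := exists_minimalFor_of_wellFoundedLT (fun L : List A => wordProd L = w)
    List.length (exists_wordProd_eq hw)
  rcases L.eq_nil_or_concat' with rfl | ⟨T, α, rfl⟩
  · exact absurd rfl hne
  refine ⟨α, α.2, fun hα => ?_⟩
  have hTα : wordProd T α.1 ∉ S.pos := fun h => by
    rw [wordProd_concat, LinearEquiv.mul_apply, reflV_self, map_neg] at hα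
    exact S.not_both _ h hα
  obtain ⟨L', hlen, hL'⟩ := exists_shorter_wordProd_eq_mul_reflV hA α T hTα
  have hle := hmin (hL'.trans (wordProd_concat T α).symm)
    (hlen.le.trans (by simp))
  simp only [List.length_append, List.length_singleton] at hle
  lia

end Length

section Parabolic

variable {S : RootSys V} {I : Finset V}

lemma neg_mem_PhiI {γ : V} (hγ : γ ∈ PhiI S I) : -γ ∈ PhiI S I :=
  ⟨S.neg_mem hγ.1, neg_mem hγ.2⟩

lemma subset_PhiI (hI : I ⊆ S.Δ) : (I : Set V) ⊆ PhiI S I :=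
  fun _ hα => ⟨S.simple_subset_roots (hI hα), Submodule.subset_span hα⟩

lemma reflV_mem_PhiI {α γ : V} (hα : α ∈ PhiI S I) (hγ : γ ∈ PhiI S I) :
    reflV α γ ∈ PhiI S I := by
  obtain ⟨n, hn⟩ := S.crystallographic α hα.1 γ hγ.1
  refine ⟨S.refl_mem α hα.1 γ hγ.1, ?_⟩
  rw [reflV_apply, hn, Int.cast_smul_eq_zsmul]
  exact sub_mem hγ.2 (Submodule.smul_mem _ n hα.2)

lemma weyl_apply_mem_PhiI (hI : I ⊆ S.Δ) {w : V ≃ₗ[ℝ] V} (hw : w ∈ weyl (I : Set V)) {γ : V}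
    (hγ : γ ∈ PhiI S I) : w γ ∈ PhiI S I :=
  weyl_apply_mem (fun _ hα _ hβ => reflV_mem_PhiI (subset_PhiI hI hα) hβ) hw γ hγ

lemma exists_nonneg_sum_eq_of_mem_PhiI (hI : I ⊆ S.Δ) {γ : V} (hγ : γ ∈ PhiI S I)
    (hpos : γ ∈ S.pos) : ∃ c : V → ℝ, (∀ α ∈ I, 0 ≤ c α) ∧ γ = ∑ α ∈ I, c α • α := by
  obtain ⟨c, hc, hγc⟩ := S.simple_gen γ hpos
  obtain ⟨n, -, hγn⟩ := Submodule.mem_span_finset.mp hγ.2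
  have hcoeff : ∀ α ∈ S.Δ, c α = if α ∈ I then (n α : ℝ) else 0 := by
    refine S.coeff_eq_of_sum_eq ?_
    simp only [← hγc, ite_smul, zero_smul, Finset.sum_ite_mem, Finset.inter_eq_right.mpr hI,
      Int.cast_smul_eq_zsmul, hγn]
  refine ⟨c, fun α hα => hc α (hI hα), hγc.trans (Finset.sum_subset hI fun α hα hαI => ?_).symm⟩
  rw [hcoeff α hα, if_neg hαI, zero_smul]

lemma exists_inner_pos_of_mem_PhiI (hI : I ⊆ S.Δ) {γ : V} (hγ : γ ∈ PhiI S I) (hpos : γ ∈ S.pos) :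
    ∃ α ∈ I, 0 < ⟪γ, α⟫ := by
  obtain ⟨c, hc, hγc⟩ := exists_nonneg_sum_eq_of_mem_PhiI hI hγ hpos
  by_contra! hle
  have hself : ⟪γ, γ⟫ = ∑ α ∈ I, c α * ⟪γ, α⟫ := by
    conv_lhs => rw [hγc, inner_sum, ← hγc]
    simp only [real_inner_smul_right]
  refine S.ne_zero γ hγ.1 (real_inner_self_nonpos.mp ?_)
  exact hself.trans_le
    (Finset.sum_nonpos fun α hα => mul_nonpos_of_nonneg_of_nonpos (hc α hα) (hle α hα))

lemma exists_weyl_apply_eq_of_mem_pos (hI : I ⊆ S.Δ) {γ : V} (hγ : γ ∈ PhiI S I)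
    (hpos : γ ∈ S.pos) : ∃ w ∈ weyl (I : Set V), ∃ α ∈ I, w α = γ := by
  obtain ⟨ξ, hξ⟩ := S.exists_inner_eq_one
  -- A positive root of least height in the orbit of `γ` is simple: otherwise a simple reflection
  -- lowers it further while keeping it positive.
  obtain ⟨δ, hδ, hmin⟩ := Finset.exists_min_image
    {δ ∈ S.pos | ∃ w ∈ weyl (I : Set V), w δ = γ} (fun δ => ⟪ξ, δ⟫)
    ⟨γ, Finset.mem_filter.mpr ⟨hpos, 1, one_mem _, rfl⟩⟩
  obtain ⟨hδpos, w, hw, rfl⟩ := Finset.mem_filter.mp hδ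
  have hδI : δ ∈ PhiI S I := w.symm_apply_apply δ ▸ weyl_apply_mem_PhiI hI (inv_mem hw) hγ
  obtain ⟨α, hα, hδα⟩ := exists_inner_pos_of_mem_PhiI hI hδI hδpos
  refine ⟨w, hw, α, hα, ?_⟩
  by_contra hne
  have hpos' : reflV α δ ∈ S.pos :=
    S.reflV_mem_pos (hI hα) hδpos fun h => hne (h ▸ rfl)
  have hle := hmin (reflV α δ) (Finset.mem_filter.mpr ⟨hpos', w * reflV α,
    mul_mem hw (reflV_mem_weyl hα), congrArg w (reflV_reflV α δ)⟩)
  have hcoroot : 0 < ⟪δ, coroot α⟫ := by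
    have hα0 : 0 < ⟪α, α⟫ :=
      real_inner_self_pos.mpr (S.ne_zero α (S.simple_subset_roots (hI hα)))
    rw [inner_coroot]
    positivity
  rw [reflV_apply, inner_sub_right, real_inner_smul_right, hξ α (hI hα)] at hle
  linarith

lemma exists_weyl_apply_eq (hI : I ⊆ S.Δ) {γ : V} (hγ : γ ∈ PhiI S I) :
    ∃ w ∈ weyl (I : Set V), ∃ α ∈ I, w α = γ := by
  by_cases hpos : γ ∈ S.pos
  · exact exists_weyl_apply_eq_of_mem_pos hI hγ hpos
  · obtain ⟨w, hw, α, hα, hwα⟩ :=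
      exists_weyl_apply_eq_of_mem_pos hI (neg_mem_PhiI hγ) (S.neg_mem_pos hγ.1 hpos)
    refine ⟨w * reflV α, mul_mem hw (reflV_mem_weyl hα), α, hα, ?_⟩
    rw [LinearEquiv.mul_apply, reflV_self, map_neg, hwα, neg_neg]

lemma weyl_PhiI (hI : I ⊆ S.Δ) : weyl (PhiI S I) = weyl (I : Set V) := by
  refine le_antisymm ((Subgroup.closure_le _).mpr ?_) (weyl_mono (subset_PhiI hI))
  rintro _ ⟨γ, hγ, rfl⟩
  obtain ⟨w, hw, α, hα, rfl⟩ := exists_weyl_apply_eq hI hγ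
  rw [SetLike.mem_coe, eq_mul_inv_of_mul_eq (reflV_apply_mul_of_isometry (inner_weyl hw) α)]
  exact mul_mem (mul_mem hw (reflV_mem_weyl hα)) (inv_mem hw)

end Parabolic

section Theta

variable {S : RootSys V} {I : Finset V}

lemma finite_weyl_PhiI (S : RootSys V) (I : Finset V) :
    (weyl (PhiI S I) : Set (V ≃ₗ[ℝ] V)).Finite :=
  S.finite_weyl.subset (weyl_mono fun _ hα => hα.1)

lemma theta_wAct (hI : I ⊆ S.Δ) {w : V ≃ₗ[ℝ] V} (hw : w ∈ weyl (PhiI S I)) (l : HStar V) :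
    theta S I (wAct w l) = (-1 : ℤ) ^ len S w • theta S I l := by
  rw [theta, theta, smul_finsum_mem (finite_weyl_PhiI S I)]
  have hbij : Set.BijOn (· * w) (weyl (PhiI S I) : Set (V ≃ₗ[ℝ] V)) (weyl (PhiI S I)) :=
    ⟨fun u hu => mul_mem hu hw, mul_left_injective w |>.injOn,
      fun u hu => ⟨u * w⁻¹, mul_mem hu (inv_mem hw), inv_mul_cancel_right u w⟩⟩
  refine finsum_mem_eq_of_bijOn _ hbij fun u hu => ?_
  rw [SetLike.mem_coe, weyl_PhiI hI] at hu
  rw [weyl_PhiI hI] at hw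
  rw [wAct_mul, neg_one_pow_len_mul hI hu hw, Finsupp.smul_single, smul_eq_mul, mul_left_comm,
    ← mul_pow, neg_one_mul, neg_neg, one_pow, mul_one]

lemma theta_eq_zero (hI : I ⊆ S.Δ) {l : HStar V} (hl : ¬ IsRegularOn (PhiI S I) l) :
    theta S I l = 0 := by
  obtain ⟨γ, hγ, hlγ⟩ : ∃ γ ∈ PhiI S I, l γ = 0 := by simpa [IsRegularOn] using hl
  obtain ⟨w, hw, α, hα, rfl⟩ := exists_weyl_apply_eq hI hγ
  rw [← weyl_PhiI hI] at hw
  -- `ν = w⁻¹ l` is fixed by the simple reflection `s_α`, which has sign `-1`.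
  set ν := wAct w⁻¹ l with hν
  have hfix : wAct (reflV α) ν = ν := by
    have hνα : ν (coroot α) = 0 := by rw [weight_coroot, hν, wAct_apply, inv_inv, hlγ, mul_zero]
    rw [wAct_reflV, sRefl, hνα, zero_smul, sub_zero]
  have hsign : (-1 : ℤ) ^ len S (reflV α) = -1 := by
    rw [← one_mul (reflV α), neg_one_pow_len_mul_reflV (hI hα) (one_mem _), len_one, pow_zero]
  have hanti := theta_wAct hI (reflV_mem_weyl (subset_PhiI hI hα)) ν
  rw [hfix, hsign, neg_one_smul, self_eq_neg] at hanti
  have hwν : wAct w ν = l := by rw [hν, ← wAct_mul, mul_inv_cancel]; rfl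
  rw [← hwν, theta_wAct hI hw, hanti, smul_zero]

end Theta

section Dominance

variable {S : RootSys V} {I : Finset V}

lemma re_pos_of_mem_LambdaP (hI : I ⊆ S.Δ) {m : HStar V} (hm : m ∈ LambdaP (I : Set V)) {γ : V}
    (hγ : γ ∈ PhiI S I) (hpos : γ ∈ S.pos) : 0 < (m γ).re := by
  have hsimple : ∀ α ∈ I, 0 < (m α).re := fun α hα => by
    obtain ⟨n, hn, hmn⟩ := hm α hα
    have hα0 : 0 < ⟪α, α⟫ :=
      real_inner_self_pos.mpr (S.ne_zero α (S.simple_subset_roots (hI hα)))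
    have hre := congrArg Complex.re hmn
    rw [weight_coroot, Complex.re_ofReal_mul, Complex.intCast_re] at hre
    refine pos_of_mul_pos_right (a := 2 / ⟪α, α⟫) ?_ (by positivity)
    rw [hre]
    exact_mod_cast hn
  obtain ⟨c, hc, hγc⟩ := exists_nonneg_sum_eq_of_mem_PhiI hI hγ hpos
  have hmγ : (m γ).re = ∑ α ∈ I, c α * (m α).re := by
    conv_lhs => rw [hγc, map_sum, Complex.re_sum]
    simp only [map_smul, Complex.real_smul, Complex.re_ofReal_mul]
  obtain ⟨α, hα, hcα⟩ := Finset.exists_ne_zero_of_sum_ne_zero (hγc ▸ S.ne_zero γ hγ.1)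
  have hcα : 0 < c α := (hc α hα).lt_of_ne' (left_ne_zero_of_smul hcα)
  rw [hmγ]
  exact Finset.sum_pos' (fun α hα => mul_nonneg (hc α hα) (hsimple α hα).le)
    ⟨α, hα, mul_pos hcα (hsimple α hα)⟩

lemma isRegularOn_of_mem_LambdaP (hI : I ⊆ S.Δ) {m : HStar V} (hm : m ∈ LambdaP (I : Set V)) :
    IsRegularOn (PhiI S I) m := by
  intro γ hγ h0
  by_cases hpos : γ ∈ S.pos
  · simpa [h0] using re_pos_of_mem_LambdaP hI hm hγ hpos
  · simpa [h0] using
      re_pos_of_mem_LambdaP hI hm (neg_mem_PhiI hγ) (S.neg_mem_pos hγ.1 hpos)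

lemma eq_one_of_wAct_mem_LambdaP (hI : I ⊆ S.Δ) {m : HStar V} (hm : m ∈ LambdaP (I : Set V))
    {w : V ≃ₗ[ℝ] V} (hw : w ∈ weyl (PhiI S I)) (hwm : wAct w m ∈ LambdaP (I : Set V)) :
    w = 1 := by
  rw [weyl_PhiI hI] at hw
  by_contra hne
  obtain ⟨α, hα, hwα⟩ := exists_apply_notMem_pos_of_ne_one hI hw hne
  have hαI := subset_PhiI hI hα
  have hwαI := weyl_apply_mem_PhiI hI hw hαI
  have hpos := re_pos_of_mem_LambdaP hI hm hαI (S.simple_subset (hI hα))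
  have hneg := re_pos_of_mem_LambdaP hI hwm (neg_mem_PhiI hwαI) (S.neg_mem_pos hwαI.1 hwα)
  rw [map_neg, wAct_apply_apply, Complex.neg_re] at hneg
  linarith

lemma eq_of_wAct_mem_LambdaP (hI : I ⊆ S.Δ) {l : HStar V} {w w' : V ≃ₗ[ℝ] V}
    (hw : w ∈ weyl (PhiI S I)) (hw' : w' ∈ weyl (PhiI S I))
    (hwl : wAct w l ∈ LambdaP (I : Set V)) (hwl' : wAct w' l ∈ LambdaP (I : Set V)) : w = w' := by
  refine mul_inv_eq_one.mp (eq_one_of_wAct_mem_LambdaP hI hwl' (mul_mem hw (inv_mem hw')) ?_)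
  rwa [← wAct_mul, inv_mul_cancel_right]

end Dominance

section Integrality

variable {S : RootSys V} {I : Finset V}

lemma reflV_mem_integralSet {l : HStar V} {α γ : V} (hα : α ∈ integralSet S l)
    (hγ : γ ∈ integralSet S l) : reflV α γ ∈ integralSet S l := by
  obtain ⟨a, ha⟩ := hα.2
  obtain ⟨b, hb⟩ := hγ.2
  obtain ⟨n, hn⟩ := S.crystallographic γ hγ.1 α hα.1
  refine ⟨S.refl_mem α hα.1 γ hγ.1, b - n * a, ?_⟩
  rw [coroot_reflV, map_sub, map_smul, ha, hb, hn, Complex.real_smul]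
  push_cast
  ring

lemma isInt_coroot_of_mem_PhiI (hI : I ⊆ S.Δ) {l : HStar V}
    (hl : ∀ α ∈ I, IsInt (l (coroot α))) {γ : V} (hγ : γ ∈ PhiI S I) : IsInt (l (coroot γ)) := by
  have hmem : ∀ α ∈ (I : Set V), α ∈ integralSet S l := fun α hα =>
    ⟨S.simple_subset_roots (hI hα), hl α hα⟩
  obtain ⟨w, hw, α, hα, rfl⟩ := exists_weyl_apply_eq hI hγ
  exact (weyl_apply_mem (fun α hα _ => reflV_mem_integralSet (hmem α hα)) hw α (hmem α hα)).2

lemma isInt_sRefl_coroot {l : HStar V} {β γ : V} (hβ : β ∈ integralSet S l)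
    (hγ : γ ∈ integralSet S l) : IsInt (sRefl β l (coroot γ)) := by
  obtain ⟨b, hb⟩ := hβ.2
  obtain ⟨c, hc⟩ := hγ.2
  obtain ⟨n, hn⟩ := S.crystallographic γ hγ.1 β hβ.1
  refine ⟨c - b * n, ?_⟩
  rw [sRefl_apply, hb, hc, hn]
  push_cast
  rfl

lemma wAct_coroot_apply {w : V ≃ₗ[ℝ] V} (hw : w ∈ weyl (PhiI S I)) (l : HStar V) (γ : V) :
    wAct w l (coroot γ) = l (coroot (w⁻¹ γ)) := by
  rw [wAct_apply, coroot_apply_of_isometry (inner_weyl (inv_mem hw))]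

lemma exists_wAct_mem_LambdaP (hI : I ⊆ S.Δ) {l : HStar V}
    (hl : ∀ α ∈ I, IsInt (l (coroot α))) (hreg : IsRegularOn (PhiI S I) l) :
    ∃ w ∈ weyl (PhiI S I), wAct w l ∈ LambdaP (I : Set V) := by
  obtain ⟨ξ, hξ⟩ := S.exists_inner_eq_one
  -- `s_α` lowers the value at `ξ` by `⟨w l, α^∨⟩`, so a maximal value forces `⟨w l, α^∨⟩ ≥ 0`.
  obtain ⟨w, hw, hmax⟩ := Set.exists_max_image (weyl (PhiI S I) : Set (V ≃ₗ[ℝ] V))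
    (fun w => (wAct w l ξ).re) (finite_weyl_PhiI S I) ⟨1, one_mem _⟩
  refine ⟨w, hw, fun α hα => ?_⟩
  have hαI : w⁻¹ α ∈ PhiI S I :=
    weyl_apply_mem_PhiI hI (weyl_PhiI hI ▸ inv_mem hw) (subset_PhiI hI hα)
  obtain ⟨n, hn⟩ := isInt_coroot_of_mem_PhiI hI hl hαI
  rw [wAct_coroot_apply hw]
  refine ⟨n, lt_of_le_of_ne ?_ ?_, hn⟩
  · have hle := hmax (reflV α * w) (mul_mem (reflV_mem_weyl (subset_PhiI hI hα)) hw)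
    rw [wAct_mul, wAct_reflV, sRefl_apply, real_inner_comm, hξ α (hI hα), wAct_coroot_apply hw, hn,
      Complex.ofReal_one, mul_one, Complex.sub_re, Complex.intCast_re] at hle
    exact_mod_cast (sub_le_self_iff _).mp hle
  · rintro rfl
    have hα0 : ⟪w⁻¹ α, w⁻¹ α⟫ ≠ 0 := inner_self_ne_zero.mpr (S.ne_zero _ hαI.1)
    rw [weight_coroot, Int.cast_zero] at hn
    exact mul_ne_zero (by exact_mod_cast div_ne_zero two_ne_zero hα0) (hreg _ hαI) hn

end Integrality

section Sign

variable {S : RootSys V} {I : Finset V}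

lemma isRegularOn_of_wAct (hI : I ⊆ S.Δ) {l : HStar V} {w : V ≃ₗ[ℝ] V}
    (hw : w ∈ weyl (PhiI S I)) (hwl : IsRegularOn (PhiI S I) (wAct w l)) :
    IsRegularOn (PhiI S I) l := fun γ hγ h0 =>
  hwl (w γ) (weyl_apply_mem_PhiI hI (weyl_PhiI hI ▸ hw) hγ) (by rw [wAct_apply_apply, h0])

lemma sgnW_of_mem_LambdaP (hI : I ⊆ S.Δ) {l m : HStar V} (hm : m ∈ LambdaP (I : Set V)) :
    sgnW S (PhiI S I) l m =
      if h : ∃ w, w ∈ weyl (PhiI S I) ∧ m = wAct w l then (-1) ^ len S h.choose else 0 := by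
  have hreg := isRegularOn_of_mem_LambdaP hI hm
  by_cases h : ∃ w, w ∈ weyl (PhiI S I) ∧ m = wAct w l
  · have hl : IsRegularOn (PhiI S I) l := by
      obtain ⟨w, hw, rfl⟩ := h
      exact isRegularOn_of_wAct hI hw hreg
    rw [sgnW, dif_pos ⟨hl, hreg, h⟩, dif_pos h]
  · rw [sgnW, dif_neg fun h' => h h'.2.2, dif_neg h]

lemma sgnW_wAct (hI : I ⊆ S.Δ) {l : HStar V} {w : V ≃ₗ[ℝ] V} (hw : w ∈ weyl (PhiI S I))
    (hwl : wAct w l ∈ LambdaP (I : Set V)) :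
    sgnW S (PhiI S I) l (wAct w l) = (-1) ^ len S w := by
  have h : ∃ u, u ∈ weyl (PhiI S I) ∧ wAct w l = wAct u l := ⟨w, hw, rfl⟩
  obtain ⟨hu, hul⟩ := h.choose_spec
  rw [sgnW_of_mem_LambdaP hI hwl, dif_pos h,
    ← eq_of_wAct_mem_LambdaP hI hw hu hwl (hul ▸ hwl)]

lemma sgnW_eq_zero {Φ'' : Set V} {l : HStar V} (hl : ¬ IsRegularOn Φ'' l) (m : HStar V) :
    sgnW S Φ'' l m = 0 :=
  dif_neg fun h => hl h.1

lemma exists_eq_wAct_of_sgnW_ne_zero {Φ'' : Set V} {l m : HStar V} (h : sgnW S Φ'' l m ≠ 0) :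
    ∃ w ∈ weyl Φ'', m = wAct w l := by
  by_contra hne
  exact h (dif_neg fun h' => hne h'.2.2)

lemma subsingleton_sgnW_ne_zero (hI : I ⊆ S.Δ) (l : HStar V) :
    {m ∈ LambdaP (I : Set V) | sgnW S (PhiI S I) l m ≠ 0}.Subsingleton := by
  rintro m ⟨hm, hlm⟩ m' ⟨hm', hlm'⟩
  obtain ⟨w, hw, rfl⟩ := exists_eq_wAct_of_sgnW_ne_zero hlm
  obtain ⟨w', hw', rfl⟩ := exists_eq_wAct_of_sgnW_ne_zero hlm'
  rw [eq_of_wAct_mem_LambdaP hI hw hw' hm hm']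

lemma theta_eq_finsum_sgnW (hI : I ⊆ S.Δ) {l : HStar V} (hl : ∀ α ∈ I, IsInt (l (coroot α))) :
    theta S I l = ∑ᶠ m ∈ LambdaP (I : Set V), sgnW S (PhiI S I) l m • theta S I m := by
  by_cases hreg : IsRegularOn (PhiI S I) l
  · obtain ⟨w, hw, hwl⟩ := exists_wAct_mem_LambdaP hI hl hreg
    have hsgn : sgnW S (PhiI S I) l (wAct w l) ≠ 0 := by
      rw [sgnW_wAct hI hw hwl]
      exact pow_ne_zero _ (by norm_num)
    have hsingle : ∀ m ∈ Function.support fun m => sgnW S (PhiI S I) l m • theta S I m,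
        m ∈ LambdaP (I : Set V) ↔ m ∈ ({wAct w l} : Set (HStar V)) := fun m hm =>
      ⟨fun hmΛ => subsingleton_sgnW_ne_zero hI l ⟨hmΛ, left_ne_zero_of_smul hm⟩ ⟨hwl, hsgn⟩,
        fun h => h ▸ hwl⟩
    rw [finsum_mem_inter_support_eq' _ _ _ hsingle, finsum_mem_singleton, sgnW_wAct hI hw hwl,
      theta_wAct hI hw, smul_smul, ← mul_pow, neg_one_mul, neg_neg, one_pow, one_smul]
  · simp only [theta_eq_zero hI hreg, sgnW_eq_zero hreg, zero_smul, finsum_mem_zero]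

end Sign

section Jantzen

variable {S : RootSys V} {I : Finset V}

lemma finite_PsiP (S : RootSys V) (Φ'' Φ' : Set V) (l : HStar V) : (PsiP S Φ'' Φ' l).Finite :=
  S.pos.finite_toSet.subset fun _ hβ => hβ.1.2

lemma finsum_PsiP_eq_finsum_PsiPP {M : Type*} [AddCommMonoid M] {Φ'' Φ' : Set V} {l : HStar V}
    {f : V → M} (hf : ∀ β, ¬ IsRegularOn Φ'' (sRefl β l) → f β = 0) :
    ∑ᶠ β ∈ PsiP S Φ'' Φ' l, f β = ∑ᶠ β ∈ PsiPP S Φ'' Φ' l, f β :=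
  finsum_mem_inter_support_eq' _ _ _ fun β hβ =>
    ⟨fun h => ⟨h, not_not.mp fun hreg => hβ (hf β hreg)⟩, fun h => h.1⟩

lemma finsum_PsiP_theta (hI : I ⊆ S.Δ) (Φ' : Set V) (l : HStar V) :
    ∑ᶠ β ∈ PsiP S (PhiI S I) Φ' l, theta S I (sRefl β l) =
      ∑ᶠ β ∈ PsiPP S (PhiI S I) Φ' l, theta S I (sRefl β l) :=
  finsum_PsiP_eq_finsum_PsiPP fun _ hβ => theta_eq_zero hI hβ

lemma jc_eq_finsum_PsiP (Φ'' Φ' : Set V) (l m : HStar V) :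
    jc S Φ'' Φ' l m = ∑ᶠ β ∈ PsiP S Φ'' Φ' l, sgnW S Φ'' (sRefl β l) m :=
  (finsum_PsiP_eq_finsum_PsiPP fun _ hβ => sgnW_eq_zero hβ m).symm

lemma finite_jc_ne_zero (hI : I ⊆ S.Δ) (Φ' : Set V) (l : HStar V) :
    {m ∈ LambdaP (I : Set V) | jc S (PhiI S I) Φ' l m ≠ 0}.Finite := by
  refine ((finite_PsiP S (PhiI S I) Φ' l).biUnion fun β _ =>
    (subsingleton_sgnW_ne_zero hI (sRefl β l)).finite).subset fun m ⟨hm, hjc⟩ => ?_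
  rw [jc_eq_finsum_PsiP] at hjc
  obtain ⟨β, hβ, hsgn⟩ := exists_ne_zero_of_finsum_mem_ne_zero hjc
  exact Set.mem_biUnion hβ ⟨hm, hsgn⟩

lemma finsum_PsiP_theta_eq_finsum_jc (hI : I ⊆ S.Δ) (Φ' : Set V) {l : HStar V}
    (hl : ∀ α ∈ I, IsInt (l (coroot α))) :
    ∑ᶠ β ∈ PsiP S (PhiI S I) Φ' l, theta S I (sRefl β l) =
      ∑ᶠ m ∈ LambdaP (I : Set V), jc S (PhiI S I) Φ' l m • theta S I m := by
  have hint : ∀ β ∈ PsiP S (PhiI S I) Φ' l, ∀ α ∈ I, IsInt (sRefl β l (coroot α)) := by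
    rintro β ⟨⟨-, hβ⟩, -, n, -, hn⟩ α hα
    exact isInt_sRefl_coroot (S := S) ⟨S.pos_subset hβ, n, hn⟩
      ⟨S.simple_subset_roots (hI hα), hl α hα⟩
  calc ∑ᶠ β ∈ PsiP S (PhiI S I) Φ' l, theta S I (sRefl β l)
      = ∑ᶠ β ∈ PsiP S (PhiI S I) Φ' l, ∑ᶠ m ∈ LambdaP (I : Set V),
          sgnW S (PhiI S I) (sRefl β l) m • theta S I m :=
        finsum_mem_congr rfl fun β hβ => theta_eq_finsum_sgnW hI (hint β hβ)
    _ = ∑ᶠ m ∈ LambdaP (I : Set V), ∑ᶠ β ∈ PsiP S (PhiI S I) Φ' l,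
          sgnW S (PhiI S I) (sRefl β l) m • theta S I m :=
        finsum_mem_comm_of_finite _ (finite_PsiP S _ _ l) fun β _ =>
          (subsingleton_sgnW_ne_zero hI (sRefl β l)).finite.subset fun _ hm =>
            ⟨hm.1, left_ne_zero_of_smul hm.2⟩
    _ = ∑ᶠ m ∈ LambdaP (I : Set V), jc S (PhiI S I) Φ' l m • theta S I m := by
        simp only [jc_eq_finsum_PsiP, finsum_smul]

end Jantzen

theorem statement_4_general {V : Type*} [NormedAddCommGroup V] [InnerProductSpace ℝ V]
    [FiniteDimensional ℝ V] (S : RootSys V) (I : Finset V) (hI : I ⊆ S.Δ) (Φ' : Set V)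
    (lam : HStar V) (hlam : ∀ α ∈ I, IsInt (lam (coroot α))) :
    (∑ᶠ β ∈ PsiP S (PhiI S I) Φ' lam, theta S I (sRefl β lam)) =
      (∑ᶠ β ∈ PsiPP S (PhiI S I) Φ' lam, theta S I (sRefl β lam)) ∧
    (∑ᶠ β ∈ PsiP S (PhiI S I) Φ' lam, theta S I (sRefl β lam)) =
      (∑ᶠ mu ∈ LambdaP (I : Set V), jc S (PhiI S I) Φ' lam mu • theta S I mu) ∧
    {mu ∈ LambdaP (I : Set V) | jc S (PhiI S I) Φ' lam mu ≠ 0}.Finite ∧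
    (∀ mu ∈ LambdaP (I : Set V),
      jc S (PhiI S I) Φ' lam mu =
        ∑ᶠ β ∈ PsiP S (PhiI S I) Φ' lam,
          (if h : ∃ w, w ∈ weyl (PhiI S I) ∧ mu = wAct w (sRefl β lam)
           then (-1 : ℤ) ^ len S h.choose else 0)) ∧
    (∀ mu ∈ LambdaP (I : Set V), ∀ β ∈ PsiP S (PhiI S I) Φ' lam,
      ∀ w w' : V ≃ₗ[ℝ] V, w ∈ weyl (PhiI S I) → w' ∈ weyl (PhiI S I) →
        mu = wAct w (sRefl β lam) → mu = wAct w' (sRefl β lam) → w = w') := by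
  refine ⟨finsum_PsiP_theta hI Φ' lam, finsum_PsiP_theta_eq_finsum_jc hI Φ' hlam,
    finite_jc_ne_zero hI Φ' lam, fun mu hmu => ?_, fun mu hmu β _ w w' hw hw' h h' => ?_⟩
  · simp only [jc_eq_finsum_PsiP, sgnW_of_mem_LambdaP hI hmu]
  · exact eq_of_wAct_mem_LambdaP hI hw hw' (h ▸ hmu) (h' ▸ hmu)

/-- Definition/Lemma 4.1 and Lemma 4.5: for `λ ∈ Λ_I⁺`,
`Σ_{β ∈ Ψ_λ⁺} θ(s_β λ) = Σ_{β ∈ Ψ_λ⁺⁺} θ(s_β λ) = Σ_{μ ∈ Λ_I⁺} c(λ,μ) θ(μ)`,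
where the Jantzen coefficient `c(λ,μ) = Σ_{β ∈ Ψ_λ⁺⁺} sgn(s_β λ, μ)` is nonzero for only
finitely many `μ`; moreover `c(λ,μ) = Σ_{β ∈ Ψ⁺_{λ,μ}} (-1)^{ℓ(w_β)}` where
`Ψ⁺_{λ,μ} = {β ∈ Ψ_λ⁺ : μ = w_β s_β λ for some w_β ∈ W_I}`, the element `w_β` being
unique for each such `β`. -/
theorem statement_4 {V : Type*} [NormedAddCommGroup V] [InnerProductSpace ℝ V]
    [FiniteDimensional ℝ V]
    (S : RootSys V) (I : Finset V) (hI : I ⊆ S.Δ)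
    (lam : HStar V) (hlam : lam ∈ LambdaP (I : Set V)) :
    (∑ᶠ β ∈ PsiP S (PhiI S I) (S.Φ : Set V) lam, theta S I (sRefl β lam)) =
      (∑ᶠ β ∈ PsiPP S (PhiI S I) (S.Φ : Set V) lam, theta S I (sRefl β lam)) ∧
    (∑ᶠ β ∈ PsiP S (PhiI S I) (S.Φ : Set V) lam, theta S I (sRefl β lam)) =
      (∑ᶠ mu ∈ LambdaP (I : Set V),
        jc S (PhiI S I) (S.Φ : Set V) lam mu • theta S I mu) ∧
    {mu ∈ LambdaP (I : Set V) | jc S (PhiI S I) (S.Φ : Set V) lam mu ≠ 0}.Finite ∧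
    (∀ mu ∈ LambdaP (I : Set V),
      jc S (PhiI S I) (S.Φ : Set V) lam mu =
        ∑ᶠ β ∈ PsiP S (PhiI S I) (S.Φ : Set V) lam,
          (if h : ∃ w, w ∈ weyl (PhiI S I) ∧ mu = wAct w (sRefl β lam)
           then (-1 : ℤ) ^ len S h.choose else 0)) ∧
    (∀ mu ∈ LambdaP (I : Set V), ∀ β ∈ PsiP S (PhiI S I) (S.Φ : Set V) lam,
      ∀ w w' : V ≃ₗ[ℝ] V, w ∈ weyl (PhiI S I) → w' ∈ weyl (PhiI S I) →
        mu = wAct w (sRefl β lam) → mu = wAct w' (sRefl β lam) → w = w') :=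
  statement_4_general S I hI (S.Φ : Set V) lam fun α hα =>
    (hlam α hα).imp fun _ hn => hn.2

end JantzenGVM
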